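/- arXiv:1106.1666 — 2 statements merged into one kernel-verified Lean document; each statement's English description precedes it below -/
import Mathlib

section
/- For a form p(X) = Σ_{i=1}^n β_i X_i^{2d} − μ·X^α with |α| = 2d, β_i ≥ 0, and μ ≥ 0 whenever all α_i are even, the following are equivalent: (1) p is positive semidefinite; (2) μ^{2d}·α^α ≤ (2d)^{2d}·β^α where α^α = Π α_i^{α_i} and β^α = Π β_i^{α_i}; (3) p is a sum of squares. -/
open MvPolynomial

/-!
The implication (3) ⇒ (1) is clear, and (1) ⇒ (2) evaluates `p` at the equality case of the
AM–GM inequality, `x_i = ± (α_i / β_i)^{1/2d}`; vanishing `β_i` are handled by replacing `β_i`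
with `β_i + ε` and letting `ε → 0`.

For (2) ⇒ (3) the main point is that the AM–GM inequality has a sum-of-squares certificate
(Hurwitz). Call `f ≤ g` when `g - f` is a sum of squares; this is compatible with sums and with
products by sums of squares. For `m` elements `y_i` that are sums of squares, `m ∏ y_i ≤ ∑ y_i^m`
follows by induction on `m`: the case `m` applied to the elements other than `y_j`, multiplied by
`y_j` and summed over `j`, bounds `∏ y_i` by `∑_{i ≠ j} y_j y_i^m`, and
`(y_i - y_j) (y_i^m - y_j^m) = (y_i - y_j)^2 ∑_k y_i^k y_j^{m-1-k}` bounds the latter by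
`∑ y_i^{m+1}` (`sumSq_amgm`). For a product of `2d` arbitrary elements, split it in two halves `A`
and `B` of `d` factors, use `2AB ≤ A² + B²`, and apply the above to the squares of the factors
(`sumSq_amgm_even`). Repeating each variable `X_i` exactly `α_i` times gives
`2d X^α ≤ ∑ α_i X_i^{2d}` (`sumSq_agiform`). Rescaling the variables and adding squares
`γ_i X_i^{2d}` with `γ_i ≥ 0` gives the general case; the sign of `μ` is
absorbed by flipping the sign of a variable with odd exponent.
-/

section SumSq

variable {R : Type*} [CommRing R]

lemma sumSq_smul [Algebra ℝ R] {a : R} (ha : IsSumSq a) {t : ℝ} (ht : 0 ≤ t) :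
    IsSumSq (algebraMap ℝ R t * a) := by
  refine IsSumSq.mul ?_ ha
  rw [← Real.mul_self_sqrt ht, map_mul]
  exact IsSumSq.mul_self _

lemma sumSq_pow {a : R} (ha : IsSumSq a) (k : ℕ) : IsSumSq (a ^ k) := by
  have h := pow_mem (Subsemiring.mem_sumSq.2 ha) k
  exact Subsemiring.mem_sumSq.1 h

lemma sumSq_sum {ι : Type*} (s : Finset ι) (f : ι → R) (h : ∀ i ∈ s, IsSumSq (f i)) :
    IsSumSq (∑ i ∈ s, f i) :=
  Subsemiring.mem_sumSq.1 (sum_mem fun i hi => Subsemiring.mem_sumSq.2 (h i hi))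

/-- Chebyshev's inequality for two elements: `a ^ m` and `a` are ordered alike. -/
lemma sumSq_cheb {a b : R} (ha : IsSumSq a) (hb : IsSumSq b) (m : ℕ) :
    IsSumSq ((a ^ m - b ^ m) * (a - b)) := by
  rw [← geom_sum₂_mul, mul_assoc]
  exact (sumSq_sum _ _ fun i _ => (sumSq_pow ha _).mul (sumSq_pow hb _)).mul
    (IsSumSq.mul_self _)

variable [Algebra ℝ R]

/-- AM–GM inequality for sums of squares, with a sum-of-squares certificate. -/
lemma sumSq_amgm {ι : Type*} [DecidableEq ι] (y : ι → R) (hy : ∀ i, IsSumSq (y i)) (m : ℕ) :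
    ∀ s : Finset ι, s.card = m → IsSumSq (∑ i ∈ s, y i ^ m - (m : R) * ∏ i ∈ s, y i) := by
  induction m with
  | zero =>
    intro s hs
    simp [Finset.card_eq_zero.1 hs]
  | succ m ih =>
    intro s hs
    rcases Nat.eq_zero_or_pos m with rfl | hm
    · obtain ⟨a, rfl⟩ := Finset.card_eq_one.1 hs
      simp
    have hm' : (m : ℝ) ≠ 0 := by positivity
    set P := ∏ i ∈ s, y i with hP
    set T := ∑ i ∈ s, y i ^ (m + 1) with hT
    set U := ∑ j ∈ s, y j * ∑ i ∈ s, y i ^ m with hU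
    have h1 : IsSumSq (∑ j ∈ s, y j *
        (∑ i ∈ s.erase j, y i ^ m - (m : R) * ∏ i ∈ s.erase j, y i)) :=
      sumSq_sum _ _ fun j hj => (hy j).mul
        (ih _ (by rw [Finset.card_erase_of_mem hj, hs]; rfl))
    have h1' : ∑ j ∈ s, y j * (∑ i ∈ s.erase j, y i ^ m - (m : R) * ∏ i ∈ s.erase j, y i)
        = U - T - (m : R) * ((m + 1 : R) * P) := by
      have : ∀ j ∈ s, y j * (∑ i ∈ s.erase j, y i ^ m - (m : R) * ∏ i ∈ s.erase j, y i)
          = y j * ∑ i ∈ s, y i ^ m - y j ^ (m + 1) - (m : R) * P := by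
        intro j hj
        rw [hP, ← Finset.mul_prod_erase s y hj, ← Finset.add_sum_erase s (fun i => y i ^ m) hj]
        ring
      rw [Finset.sum_congr rfl this, Finset.sum_sub_distrib, Finset.sum_sub_distrib,
        Finset.sum_const, hs, nsmul_eq_mul]
      push_cast
      ring
    have h2 : IsSumSq (∑ i ∈ s, ∑ j ∈ s, (y i ^ m - y j ^ m) * (y i - y j)) :=
      sumSq_sum _ _ fun i _ => sumSq_sum _ _ fun j _ => sumSq_cheb (hy i) (hy j) m
    have h2' : ∑ i ∈ s, ∑ j ∈ s, (y i ^ m - y j ^ m) * (y i - y j)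
        = 2 * ((m + 1 : R) * T - U) := by
      have e : ∀ i j, (y i ^ m - y j ^ m) * (y i - y j)
          = y i ^ (m + 1) + y j ^ (m + 1) - y i * y j ^ m - y i ^ m * y j := by
        intro i j; ring
      have hU' : ∑ i ∈ s, ∑ j ∈ s, y i ^ m * y j = U := by
        rw [Finset.sum_comm, hU]
        exact Finset.sum_congr rfl fun j _ => by
          rw [Finset.mul_sum]; exact Finset.sum_congr rfl fun i _ => mul_comm _ _
      simp only [e, Finset.sum_sub_distrib, Finset.sum_add_distrib, Finset.sum_const, hs,
        nsmul_eq_mul]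
      rw [hU', ← Finset.mul_sum, ← hT]
      simp only [← Finset.mul_sum]
      rw [← hU]
      push_cast
      ring
    rw [h1'] at h1
    rw [h2'] at h2
    have key := sumSq_smul ((h1.add h1).add h2) (t := 1 / (2 * m)) (by positivity)
    refine cast (congrArg IsSumSq ?_) key
    have hc : algebraMap ℝ R (1 / (2 * m)) * (2 * m) = 1 := by
      have : (2 * m : R) = algebraMap ℝ R (2 * m) := by
        rw [map_mul, map_natCast, map_ofNat]
      rw [this, ← map_mul]
      rw [one_div, inv_mul_cancel₀ (by positivity), map_one]
    push_cast
    linear_combination (T - (m + 1) * P) * hc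

/-- AM–GM inequality for an even number of arbitrary elements. -/
lemma sumSq_amgm_even {ι : Type*} [Fintype ι] (x : ι → R) (d : ℕ)
    (hc : Fintype.card ι = 2 * d) :
    IsSumSq (∑ i, x i ^ (2 * d) - ((2 * d : ℕ) : R) * ∏ i, x i) := by
  classical
  obtain ⟨s, -, hs⟩ := Finset.exists_subset_card_eq (s := (Finset.univ : Finset ι)) (n := d)
    (by rw [Finset.card_univ, hc]; omega)
  have hs' : sᶜ.card = d := by rw [Finset.card_compl, hs, hc]; omega
  have hy : ∀ i, IsSumSq (x i ^ 2) := fun i => by rw [sq]; exact IsSumSq.mul_self _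
  have h1 := sumSq_amgm (fun i => x i ^ 2) hy d s hs
  have h2 := sumSq_amgm (fun i => x i ^ 2) hy d sᶜ hs'
  have h3 := sumSq_smul (IsSumSq.mul_self (∏ i ∈ s, x i - ∏ i ∈ sᶜ, x i))
    (Nat.cast_nonneg (α := ℝ) d)
  refine cast (congrArg IsSumSq ?_) ((h1.add h2).add h3)
  rw [← Finset.sum_add_sum_compl s, ← Finset.prod_mul_prod_compl s]
  simp only [← pow_mul, Finset.prod_pow, map_natCast]
  push_cast
  ring

/-- Weighted AM–GM inequality with integer weights `α i` of even total `2d`. -/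
lemma sumSq_agiform {n d : ℕ} (α : Fin n → ℕ) (hα : ∑ i, α i = 2 * d) (x : Fin n → R) :
    IsSumSq (∑ i, (α i : R) * x i ^ (2 * d) - ((2 * d : ℕ) : R) * ∏ i, x i ^ α i) := by
  have h := sumSq_amgm_even (ι := Σ i, Fin (α i)) (fun k => x k.1) d (by simp [hα])
  simpa [Fintype.sum_sigma, Fintype.prod_sigma] using h

end SumSq

lemma exists_nonneg_root {d : ℕ} (hd : 1 ≤ d) {a : ℝ} (ha : 0 ≤ a) :
    ∃ c : ℝ, 0 ≤ c ∧ c ^ (2 * d) = a :=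
  ⟨a ^ (((2 * d : ℕ) : ℝ)⁻¹), by positivity, Real.rpow_inv_natCast_pow ha (by omega)⟩

/-- Unless all exponents are even, flipping the sign of one variable changes the sign of the
monomial, so that the sign of `μ` does not matter. -/
lemma exists_signs {n : ℕ} (α : Fin n → ℕ) (μ : ℝ) (hμ : (∀ i, Even (α i)) → 0 ≤ μ) :
    ∃ σ : Fin n → ℝ, (∀ i, σ i ^ 2 = 1) ∧ μ * ∏ i, σ i ^ α i = |μ| := by
  rcases le_or_gt 0 μ with h | h
  · exact ⟨fun _ => 1, by simp, by simp [abs_of_nonneg h]⟩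
  · have : ∃ j, ¬ Even (α j) := by
      by_contra! hh
      exact absurd (hμ hh) (not_le.2 h)
    obtain ⟨j, hj⟩ := this
    refine ⟨fun i => if i = j then -1 else 1, fun i => by dsimp only; split_ifs <;> norm_num, ?_⟩
    have : ∀ i, (if i = j then (-1 : ℝ) else 1) ^ α i = if i = j then -1 else 1 := by
      intro i
      split_ifs with hij
      · subst hij; exact (Nat.not_even_iff_odd.1 hj).neg_one_pow
      · simp
    simp [this, abs_of_neg h]

lemma eval_form {n d : ℕ} (α : Fin n →₀ ℕ) (β : Fin n → ℝ) (μ : ℝ) (x : Fin n → ℝ) :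
    eval x (∑ i, C (β i) * X i ^ (2 * d) - C μ * monomial α (1 : ℝ))
      = ∑ i, β i * x i ^ (2 * d) - μ * ∏ i, x i ^ α i := by
  simp [eval_monomial, Finsupp.prod_fintype]

/-- The coefficient bound for positive `b`, from evaluation at the equality case of AM–GM. -/
lemma bound_of_pos {n d : ℕ} (hd : 1 ≤ d) (α : Fin n → ℕ) (hα : ∑ i, α i = 2 * d)
    (b : Fin n → ℝ) (hb : ∀ i, 0 < b i) (μ : ℝ) (hμ : (∀ i, Even (α i)) → 0 ≤ μ)
    (h : ∀ x : Fin n → ℝ, 0 ≤ ∑ i, b i * x i ^ (2 * d) - μ * ∏ i, x i ^ α i) :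
    μ ^ (2 * d) * ∏ i, (α i : ℝ) ^ (α i) ≤ ((2 * d : ℕ) : ℝ) ^ (2 * d) * ∏ i, (b i) ^ (α i) := by
  obtain ⟨σ, hσ, hσμ⟩ := exists_signs α μ hμ
  have hr : ∀ i, ∃ c : ℝ, 0 ≤ c ∧ c ^ (2 * d) = α i / b i := fun i =>
    exists_nonneg_root hd (div_nonneg (Nat.cast_nonneg _) (hb i).le)
  choose r hr0 hr using hr
  have h1 := h fun i => σ i * r i
  have e1 : ∑ i, b i * (σ i * r i) ^ (2 * d) = ((2 * d : ℕ) : ℝ) := by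
    conv_rhs => rw [← hα, Nat.cast_sum]
    refine Finset.sum_congr rfl fun i _ => ?_
    have := (hb i).ne'
    rw [mul_pow, hr, pow_mul, hσ]
    field_simp
    rw [one_pow, one_mul]
  have e2 : μ * ∏ i, (σ i * r i) ^ α i = |μ| * ∏ i, r i ^ α i := by
    simp only [mul_pow, Finset.prod_mul_distrib]
    rw [← hσμ]; ring
  rw [e1, e2] at h1
  have h2 : (|μ| * ∏ i, r i ^ α i) ^ (2 * d) ≤ ((2 * d : ℕ) : ℝ) ^ (2 * d) :=
    pow_le_pow_left₀ (mul_nonneg (abs_nonneg _)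
      (Finset.prod_nonneg fun i _ => pow_nonneg (hr0 i) _)) (by linarith) _
  have e3 : (∏ i, r i ^ α i) ^ (2 * d) = (∏ i, (α i : ℝ) ^ α i) / ∏ i, b i ^ α i := by
    rw [← Finset.prod_pow, ← Finset.prod_div_distrib]
    refine Finset.prod_congr rfl fun i _ => ?_
    rw [pow_right_comm, hr, div_pow]
  rw [mul_pow, e3, (even_two_mul d).pow_abs, mul_div_assoc',
    div_le_iff₀ (Finset.prod_pos fun i _ => pow_pos (hb i) _)] at h2
  exact h2

lemma bound_of_psd {n d : ℕ} (hd : 1 ≤ d) (α : Fin n → ℕ) (hα : ∑ i, α i = 2 * d)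
    (β : Fin n → ℝ) (hβ : ∀ i, 0 ≤ β i) (μ : ℝ) (hμ : (∀ i, Even (α i)) → 0 ≤ μ)
    (h : ∀ x : Fin n → ℝ, 0 ≤ ∑ i, β i * x i ^ (2 * d) - μ * ∏ i, x i ^ α i) :
    μ ^ (2 * d) * ∏ i, (α i : ℝ) ^ (α i) ≤ ((2 * d : ℕ) : ℝ) ^ (2 * d) * ∏ i, (β i) ^ (α i) := by
  have hcont : Continuous fun ε : ℝ =>
      ((2 * d : ℕ) : ℝ) ^ (2 * d) * ∏ i, (β i + ε) ^ (α i) := by fun_prop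
  have ht := (hcont.tendsto 0).mono_left (nhdsWithin_le_nhds (s := Set.Ioi 0))
  simp only [add_zero] at ht
  refine ge_of_tendsto ht ?_
  filter_upwards [self_mem_nhdsWithin] with ε hε
  have hε : 0 < ε := hε
  refine bound_of_pos hd α hα (fun i => β i + ε) (fun i => by linarith [hβ i]) μ hμ fun x => ?_
  refine (h x).trans (sub_le_sub_right (Finset.sum_le_sum fun i _ => ?_) _)
  have : 0 ≤ x i ^ (2 * d) := (even_two_mul d).pow_nonneg _
  nlinarith

lemma sumSq_of_bound {n d : ℕ} (hd : 1 ≤ d) (α : Fin n →₀ ℕ) (hα : ∑ i, α i = 2 * d)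
    (β : Fin n → ℝ) (μ : ℝ) (hβ : ∀ i, 0 ≤ β i) (hμ : (∀ i, Even (α i)) → 0 ≤ μ)
    (h : μ ^ (2 * d) * ∏ i, (α i : ℝ) ^ (α i)
          ≤ ((2 * d : ℕ) : ℝ) ^ (2 * d) * ∏ i, (β i) ^ (α i)) :
    IsSumSq (∑ i, C (β i) * X i ^ (2 * d) - C μ * monomial α (1 : ℝ)) := by
  obtain ⟨σ, hσ, hσμ⟩ := exists_signs α μ hμ
  -- `c i = 0` if `α i = 0`, by the convention `β i / 0 = 0`
  have hr : ∀ i, ∃ c : ℝ, 0 ≤ c ∧ c ^ (2 * d) = β i / α i := fun i =>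
    exists_nonneg_root hd (div_nonneg (hβ i) (Nat.cast_nonneg _))
  choose c hc0 hc using hr
  -- the largest admissible value of `|μ|`
  set M : ℝ := ((2 * d : ℕ) : ℝ) * ∏ i, c i ^ α i with hM
  have hM0 : 0 ≤ M := mul_nonneg (Nat.cast_nonneg _)
    (Finset.prod_nonneg fun i _ => pow_nonneg (hc0 i) _)
  have hμM : |μ| ≤ M := by
    refine le_of_pow_le_pow_left₀ (n := 2 * d) (by omega) hM0 ?_
    have e3 : (∏ i, c i ^ α i) ^ (2 * d) = (∏ i, β i ^ α i) / ∏ i, (α i : ℝ) ^ α i := by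
      rw [← Finset.prod_pow, ← Finset.prod_div_distrib]
      refine Finset.prod_congr rfl fun i _ => ?_
      rw [pow_right_comm, hc, div_pow]
    rw [hM, mul_pow, e3, (even_two_mul d).pow_abs, mul_div_assoc', le_div_iff₀]
    · exact h
    · refine Finset.prod_pos fun i _ => ?_
      rcases Nat.eq_zero_or_pos (α i) with h0 | h0
      · simp [h0]
      · positivity
  obtain ⟨t, ht0, ht1, ht⟩ : ∃ t : ℝ, 0 ≤ t ∧ t ≤ 1 ∧ t * M = |μ| := by
    rcases hM0.eq_or_lt with h0 | h0
    · exact ⟨0, le_rfl, zero_le_one, by linarith [abs_nonneg μ]⟩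
    · exact ⟨|μ| / M, by positivity, (div_le_one h0).2 hμM, by field_simp⟩
  have hγ : ∀ i, 0 ≤ β i - t * (α i * c i ^ (2 * d)) := by
    intro i
    have : α i * c i ^ (2 * d) ≤ β i := by
      rw [hc]
      rcases Nat.eq_zero_or_pos (α i) with h0 | h0
      · simp [h0, hβ i]
      · have : (α i : ℝ) ≠ 0 := by positivity
        field_simp; exact le_rfl
    have h0 : 0 ≤ α i * c i ^ (2 * d) := mul_nonneg (Nat.cast_nonneg _) (pow_nonneg (hc0 i) _)
    nlinarith
  have h1 : IsSumSq (∑ i, C (β i - t * (α i * c i ^ (2 * d))) *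
      (X i ^ (2 * d) : MvPolynomial (Fin n) ℝ)) :=
    sumSq_sum _ _ fun i _ => sumSq_smul
      (by rw [pow_mul, sq]; exact sumSq_pow (IsSumSq.mul_self _) d) (hγ i)
  have h2 := sumSq_smul (sumSq_agiform α hα
    (fun i => (C (σ i * c i) * X i : MvPolynomial (Fin n) ℝ))) ht0
  refine cast (congrArg IsSumSq ?_) (h1.add h2)
  have hmon : monomial α (1 : ℝ) = ∏ i, X i ^ α i := by
    rw [monomial_eq, Finsupp.prod_fintype _ _ (by simp), C_1, one_mul]
  have hsgn : μ = t * (((2 * d : ℕ) : ℝ) * ((∏ i, σ i ^ α i) * ∏ i, c i ^ α i)) := by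
    have hs : (∏ i, σ i ^ α i) * ∏ i, σ i ^ α i = 1 := by
      rw [← Finset.prod_mul_distrib]
      refine Finset.prod_eq_one fun i _ => ?_
      rw [← mul_pow, ← sq, hσ, one_pow]
    have h3 : μ = |μ| * ∏ i, σ i ^ α i := by
      rw [← hσμ, mul_assoc, hs, mul_one]
    rw [h3, ← ht, hM]
    ring
  have e1 : ∑ i, (α i : MvPolynomial (Fin n) ℝ) * (C (σ i * c i) * X i) ^ (2 * d)
      = ∑ i, C (α i * c i ^ (2 * d)) * X i ^ (2 * d) := by
    refine Finset.sum_congr rfl fun i _ => ?_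
    rw [mul_pow, ← C_pow, mul_pow, pow_mul (σ i), hσ, one_pow, one_mul, C_mul, C_eq_coe_nat]
    ring
  have e2 : ∏ i, (C (σ i * c i) * X i : MvPolynomial (Fin n) ℝ) ^ α i
      = C ((∏ i, σ i ^ α i) * ∏ i, c i ^ α i) * ∏ i, X i ^ α i := by
    simp only [mul_pow, Finset.prod_mul_distrib, C_mul, map_prod, C_pow]
  rw [e1, e2, hmon, algebraMap_eq]
  conv_rhs => rw [hsgn]
  simp only [C_sub, C_mul, sub_mul, Finset.sum_sub_distrib, mul_sub, Finset.mul_sum, C_eq_coe_nat,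
    mul_assoc]
  ring

lemma psd_of_sumSq {n : ℕ} {p : MvPolynomial (Fin n) ℝ} (hp : IsSumSq p) (x : Fin n → ℝ) :
    0 ≤ eval x p := by
  induction hp with
  | zero => simp
  | sq_add a _ ih =>
    rw [map_add, map_mul]
    exact add_nonneg (mul_self_nonneg _) ih


/-- Fidalgo–Kovacec theorem (full equivalence): for the form
`p = Σ β_i X_i^{2d} − μ·X^α` with `|α| = 2d`, `β_i ≥ 0`, and `μ ≥ 0` whenever all
`α_i` are even, the following are equivalent: (1) `p` is positive semidefinite;
(2) `μ^{2d}·α^α ≤ (2d)^{2d}·β^α`; (3) `p` is a sum of squares. -/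
theorem fidalgo_kovacec_tfae {n d : ℕ} (hd : 1 ≤ d) (α : Fin n →₀ ℕ)
    (hα : ∑ i, α i = 2 * d) (β : Fin n → ℝ) (μ : ℝ)
    (hβ : ∀ i, 0 ≤ β i) (hμ : (∀ i, Even (α i)) → 0 ≤ μ) :
    ((∀ x : Fin n → ℝ,
        0 ≤ eval x (∑ i, C (β i) * X i ^ (2 * d) - C μ * monomial α (1 : ℝ)))
      ↔ μ ^ (2 * d) * ∏ i, (α i : ℝ) ^ (α i)
          ≤ ((2 * d : ℕ) : ℝ) ^ (2 * d) * ∏ i, (β i) ^ (α i))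
    ∧ (μ ^ (2 * d) * ∏ i, (α i : ℝ) ^ (α i)
          ≤ ((2 * d : ℕ) : ℝ) ^ (2 * d) * ∏ i, (β i) ^ (α i)
      ↔ IsSumSq (∑ i, C (β i) * X i ^ (2 * d) - C μ * monomial α (1 : ℝ))) := by
  have h12 := fun h : ∀ x : Fin n → ℝ,
      0 ≤ eval x (∑ i, C (β i) * X i ^ (2 * d) - C μ * monomial α (1 : ℝ)) =>
    bound_of_psd hd α hα β hβ μ hμ fun x => by rw [← eval_form]; exact h x
  have h23 := sumSq_of_bound hd α hα β μ hβ hμ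
  exact ⟨⟨h12, fun h => psd_of_sumSq (h23 h)⟩, ⟨h23, fun h => h12 (psd_of_sumSq h)⟩⟩
end

section
/- Let f ∈ ℝ[X_1,...,X_n] be a non-constant polynomial of degree 2d and r ∈ ℝ. Suppose there exist nonnegative reals a_{α,i} (α ∈ Δ, i = 1,...,n) with a_{α,i} = 0 iff α_i = 0 such that (1) (2d)^{2d}·a_α^α = |f_α|^{2d}·α^α for every α ∈ Δ with |α| = 2d, (2) f_{2d,i} ≥ Σ_{α∈Δ} a_{α,i} for each i, and (3) f_0 − r ≥ Σ_{α∈Δ, |α|<2d}(2d−|α|)·[|f_α|^{2d}·α^α/((2d)^{2d}·a_α^α)]^{1/(2d−|α|)}. Then f − r is a sum of squares. -/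
open MvPolynomial

/-!
Every term `f_α X^α` with `α ∈ Δ` is dominated by its own share `∑ᵢ a_{α,i} Xᵢ^{2d} + m T` of the
diagonal and constant terms, where `m = 2d - |α|`, and domination means that the difference is a
sum of squares. This is the arithmetic-geometric mean inequality with sums-of-squares certificate
(Hurwitz): `∑ₖ βₖ xₖ^{2d} - 2d ∏ₖ xₖ^{βₖ}` is a sum of squares when `∑ₖ βₖ = 2d`
(`isSumSq_amgm_weighted`), applied to rescaled variables and one additional constant variable
which absorbs the defect `m` (`isSumSq_term`).

Hurwitz's theorem reduces by `(P - Q)² = P² + Q² - 2PQ` to the AM-GM inequality in `d` variables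
that are themselves squares, and this one is proved by induction on their number
(`isSumSq_amgm_of_isSumSq`), the step being the rearrangement-type inequality
`y z^m + z y^m ≤ y^{m+1} + z^{m+1}`.

What remains of `f - r` after removing these terms is a nonnegative constant, nonnegative
multiples of the `Xᵢ^{2d}`, and monomials with nonnegative coefficients and even exponents.
-/

/-! ### The arithmetic-geometric mean inequality as a sum of squares -/

section AMGM

variable {A : Type*} [CommRing A]

/-- Rewriting along an equation; stated for a `CommRing` so that the operations in the equation
carry the ring's own instances. -/
lemma IsSumSq.of_eq {x y : A} (h : IsSumSq x) (e : y = x) : IsSumSq y := e ▸ h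

lemma IsSumSq.pow' {x : A} (hx : IsSumSq x) (k : ℕ) : IsSumSq (x ^ k) := by
  induction k with
  | zero => simp
  | succ k ih => rw [pow_succ]; exact ih.mul hx

/-- The difference equals `(y - z)² ∑ yⁱ zʲ`, the sum running over `i + j = m - 1`. -/
lemma isSumSq_swap {y z : A} (hy : IsSumSq y) (hz : IsSumSq z) (m : ℕ) :
    IsSumSq (y ^ (m + 1) + z ^ (m + 1) - (y * z ^ m + z * y ^ m)) := by
  have h : y ^ (m + 1) + z ^ (m + 1) - (y * z ^ m + z * y ^ m)
      = (y - z) * (y - z) * ∑ i ∈ Finset.range m, y ^ i * z ^ (m - 1 - i) := by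
    have := (Commute.all y z).mul_geom_sum₂ m
    rw [mul_assoc, this]; ring
  rw [h]
  exact (IsSumSq.mul_self _).mul
    (IsSumSq.sum fun i _ => (hy.pow' _).mul (hz.pow' _))

variable [Algebra ℝ A]

lemma isSumSq_algebraMap {c : ℝ} (hc : 0 ≤ c) : IsSumSq (algebraMap ℝ A c) := by
  rw [← Real.mul_self_sqrt hc, map_mul]
  exact IsSumSq.mul_self _

/-- A positive integer factor can be cancelled, since its inverse is a square in `ℝ`. -/
lemma isSumSq_of_natCast_mul {k : ℕ} (hk : k ≠ 0) {x : A} (h : IsSumSq ((k : A) * x)) :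
    IsSumSq x := by
  have h2 : x = algebraMap ℝ A ((k : ℝ)⁻¹) * ((k : A) * x) := by
    rw [← map_natCast (algebraMap ℝ A) k, ← mul_assoc, ← map_mul,
      inv_mul_cancel₀ (by exact_mod_cast hk), map_one, one_mul]
  rw [h2]
  exact (isSumSq_algebraMap (by positivity)).mul h

/-- AM-GM for elements that are themselves sums of squares. The induction step applies the
hypothesis to each `s.erase j`, multiplies by `y j` and sums over `j`; the mixed terms
`y j * y i ^ m` are then traded for pure powers pairwise. -/
lemma isSumSq_amgm_of_isSumSq {ι : Type*} [DecidableEq ι] (m : ℕ) (s : Finset ι)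
    (hs : s.card = m) (y : ι → A) (hy : ∀ i ∈ s, IsSumSq (y i)) :
    IsSumSq (∑ i ∈ s, y i ^ m - (m : A) * ∏ i ∈ s, y i) := by
  induction m generalizing s with
  | zero => simp [Finset.card_eq_zero.mp hs]
  | succ m ih =>
    rcases Nat.eq_zero_or_pos m with rfl | hm
    · obtain ⟨i, rfl⟩ := Finset.card_eq_one.mp hs
      simp
    have key : ∀ j ∈ s, IsSumSq (y j * (∑ i ∈ s.erase j, y i ^ m
        - (m : A) * ∏ i ∈ s.erase j, y i)) := fun j hj =>
      (hy j hj).mul (ih (s.erase j) (by rw [Finset.card_erase_of_mem hj, hs]; rfl)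
        fun i hi => hy i (Finset.mem_of_mem_erase hi))
    -- the diagonal terms `i = j` vanish, so the sum may run over all ordered pairs
    have pairs : IsSumSq (∑ j ∈ s, ∑ i ∈ s,
        (y i ^ (m + 1) + y j ^ (m + 1) - (y i * y j ^ m + y j * y i ^ m))) :=
      IsSumSq.sum fun j hj => IsSumSq.sum fun i hi => isSumSq_swap (hy i hi) (hy j hj) m
    refine isSumSq_of_natCast_mul (k := 2 * m) (by omega) ?_
    have tot := ((IsSumSq.natCast (R := A) 2).mul (IsSumSq.sum key)).add pairs
    refine tot.of_eq ?_
    have e1 : ∑ j ∈ s, y j * (∑ i ∈ s.erase j, y i ^ m - (m : A) * ∏ i ∈ s.erase j, y i)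
        = (∑ j ∈ s, y j) * (∑ i ∈ s, y i ^ m) - ∑ j ∈ s, y j ^ (m + 1)
          - ((m + 1 : ℕ) : A) * (m * ∏ i ∈ s, y i) := by
      have e0 : ∀ z : A, ((m + 1 : ℕ) : A) * z = ∑ j ∈ s, z := fun z => by simp [hs]
      rw [e0, Finset.sum_mul, ← Finset.sum_sub_distrib, ← Finset.sum_sub_distrib]
      refine Finset.sum_congr rfl fun j hj => ?_
      rw [← Finset.mul_prod_erase s y hj, ← Finset.add_sum_erase s (fun i => y i ^ m) hj]
      ring
    have e2 : ∑ j ∈ s, ∑ i ∈ s,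
        (y i ^ (m + 1) + y j ^ (m + 1) - (y i * y j ^ m + y j * y i ^ m))
        = 2 * ((m + 1 : ℕ) : A) * ∑ i ∈ s, y i ^ (m + 1)
          - 2 * ((∑ j ∈ s, y j) * (∑ i ∈ s, y i ^ m)) := by
      simp only [Finset.sum_sub_distrib, Finset.sum_add_distrib, Finset.sum_const, hs,
        ← Finset.mul_sum, ← Finset.sum_mul, nsmul_eq_mul]
      ring
    rw [e1, e2]
    push_cast
    ring

/-- Hurwitz's theorem: AM-GM in `2d` arbitrary variables. The index set is cut into two halves
`t`, `u` of size `d`, and `2 ∏ₜ x ∏ᵤ x` is bounded by `∏ₜ x² + ∏ᵤ x²`. -/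
lemma isSumSq_amgm {ι : Type*} [DecidableEq ι] (d : ℕ) (s : Finset ι)
    (hs : s.card = 2 * d) (x : ι → A) :
    IsSumSq (∑ i ∈ s, x i ^ (2 * d) - ((2 * d : ℕ) : A) * ∏ i ∈ s, x i) := by
  obtain ⟨t, hts, ht⟩ := Finset.exists_subset_card_eq (s := s) (n := d) (by omega)
  have hu : (s \ t).card = d := by rw [Finset.card_sdiff_of_subset hts]; omega
  have sq : ∀ i, IsSumSq (x i ^ 2) := fun i => by rw [pow_two]; exact IsSumSq.mul_self _
  have h1 := isSumSq_amgm_of_isSumSq d t ht (fun i => x i ^ 2) fun i _ => sq i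
  have h2 := isSumSq_amgm_of_isSumSq d (s \ t) hu (fun i => x i ^ 2) fun i _ => sq i
  have h3 := (IsSumSq.natCast (R := A) d).mul
    (IsSumSq.mul_self (∏ i ∈ t, x i - ∏ i ∈ s \ t, x i))
  refine ((h1.add h2).add h3).of_eq ?_
  rw [← Finset.sum_sdiff hts, ← Finset.prod_sdiff hts]
  simp only [Finset.prod_pow, ← pow_mul]
  push_cast
  ring

/-- AM-GM with integer weights, obtained by repeating each variable `β k` times. -/
lemma isSumSq_amgm_weighted {κ : Type*} [Fintype κ] [DecidableEq κ] (d : ℕ) (β : κ → ℕ)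
    (hβ : ∑ k, β k = 2 * d) (x : κ → A) :
    IsSumSq (∑ k, (β k : A) * x k ^ (2 * d) - ((2 * d : ℕ) : A) * ∏ k, x k ^ β k) := by
  have h := isSumSq_amgm (A := A) d (Finset.univ : Finset (Σ k, Fin (β k)))
    (by simp [hβ]) (fun p => x p.1)
  simpa [Fintype.sum_sigma, Fintype.prod_sigma] using h

end AMGM

/-! ### The terms of the polynomial -/

/-- One term of `f` against its share of the diagonal and of the constant term. The hypothesis
`h` says that `T` makes weighted AM-GM, with weights `α i` and `m`, tight for the coefficient `c`;
for `m = 0` the value of `T` is irrelevant. -/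
lemma isSumSq_term {A : Type*} [CommRing A] [Algebra ℝ A] {n d : ℕ} (hd : 1 ≤ d)
    (α : Fin n → ℕ) (m : ℕ) (hm : ∑ i, α i + m = 2 * d) (a : Fin n → ℝ) (ha : ∀ i, 0 ≤ a i)
    (ha0 : ∀ i, a i = 0 ↔ α i = 0) (T c : ℝ) (hT : 0 ≤ T) (hc : 0 ≤ c)
    (h : ((2 * d : ℕ) : ℝ) ^ (2 * d) * (∏ i, a i ^ α i) * T ^ m
      = c ^ (2 * d) * ∏ i, (α i : ℝ) ^ α i) (x : Fin n → A) :
    IsSumSq (∑ i, algebraMap ℝ A (a i) * x i ^ (2 * d) + algebraMap ℝ A (m * T)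
      - algebraMap ℝ A c * ∏ i, x i ^ α i) := by
  have h2d : 2 * d ≠ 0 := by omega
  -- real `2d`-th roots, so that `α i * s i ^ (2d) = a i` and `t ^ (2d) = T`
  have root : ∀ z : ℝ, 0 ≤ z → ∃ w : ℝ, 0 ≤ w ∧ w ^ (2 * d) = z := fun z hz =>
    ⟨z ^ (((2 * d : ℕ) : ℝ)⁻¹), Real.rpow_nonneg hz _, Real.rpow_inv_natCast_pow hz h2d⟩
  choose s hs0 hs using fun i => root (a i / α i) (div_nonneg (ha i) (Nat.cast_nonneg _))
  obtain ⟨t, ht0, ht⟩ := root T hT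
  have hα : ∀ i, (α i : ℝ) * s i ^ (2 * d) = a i := fun i => by
    rw [hs]
    by_cases hi : α i = 0
    · simp [hi, (ha0 i).2 hi]
    · field_simp
  have hpos : 0 < ∏ i, (α i : ℝ) ^ α i := Finset.prod_pos fun i _ => by
    by_cases hi : α i = 0
    · simp [hi]
    · positivity
  have hcoef : ((2 * d : ℕ) : ℝ) * (t ^ m * ∏ i, s i ^ α i) = c := by
    refine (pow_left_inj₀ ?_ hc h2d).1 ?_
    · exact mul_nonneg (Nat.cast_nonneg _) (mul_nonneg (pow_nonneg ht0 _)
        (Finset.prod_nonneg fun i _ => pow_nonneg (hs0 i) _))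
    · have e : (∏ i, s i ^ α i) ^ (2 * d) * ∏ i, (α i : ℝ) ^ α i = ∏ i, a i ^ α i := by
        rw [← Finset.prod_pow, ← Finset.prod_mul_distrib]
        refine Finset.prod_congr rfl fun i _ => ?_
        rw [← hα i, mul_pow, ← pow_mul, ← pow_mul, mul_comm (α i) (2 * d)]
        ring
      refine mul_right_cancel₀ hpos.ne' ?_
      rw [← h, ← e, ← ht, mul_pow, mul_pow, ← pow_mul, ← pow_mul, mul_comm m]
      ring
  -- the additional variable `none` is the constant `t`, with weight `m`
  have key := isSumSq_amgm_weighted (A := A) (κ := Option (Fin n)) d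
    (fun k => k.elim m α) (by simp [Fintype.sum_option, ← hm, add_comm])
    (fun k => k.elim (algebraMap ℝ A t) fun i => algebraMap ℝ A (s i) * x i)
  refine key.of_eq ?_
  simp only [Fintype.sum_option, Fintype.prod_option, Option.elim, mul_pow,
    Finset.prod_mul_distrib, ← hcoef, ← hα, ← ht, map_mul, map_pow, map_prod, map_natCast]
  rw [add_comm]
  congr 1
  · simp only [mul_assoc]
  · ring

/-- A polynomial with nonnegative coefficients and even exponents is a sum of squares. -/
lemma isSumSq_of_even {n : ℕ} (g : MvPolynomial (Fin n) ℝ)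
    (hg : ∀ α, g.coeff α ≠ 0 → 0 ≤ g.coeff α ∧ ∀ i, Even (α i)) : IsSumSq g := by
  rw [g.as_sum]
  refine IsSumSq.sum fun α hα => ?_
  obtain ⟨h0, he⟩ := hg α (mem_support_iff.1 hα)
  rw [monomial_eq, Finsupp.prod]
  refine IsSumSq.mul (isSumSq_algebraMap (A := MvPolynomial (Fin n) ℝ) h0) (IsSumSq.prod ?_)
  exact fun i _ => ((he i).isSquare_pow _).isSumSq

/-- Main lower-bound theorem: let `f` be non-constant of degree `2d`, `r ∈ ℝ`,
and suppose there exist nonnegative reals `a_{α,i}` (with `a_{α,i} = 0` iff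
`α_i = 0`) satisfying
(1) `(2d)^{2d}·a_α^α = |f_α|^{2d}·α^α` for `α ∈ Δ` with `|α| = 2d`,
(2) `f_{2d,i} ≥ Σ_{α∈Δ} a_{α,i}`, and
(3) `f_0 − r ≥ Σ_{α∈Δ, |α|<2d}(2d−|α|)·[|f_α|^{2d}α^α/((2d)^{2d}a_α^α)]^{1/(2d−|α|)}`.
Then `f − r` is a sum of squares. -/
theorem fgp_lower_bound {n d : ℕ} (hd : 1 ≤ d) (f : MvPolynomial (Fin n) ℝ)
    (hdeg : f.totalDegree = 2 * d) (r : ℝ) (Δ : Finset (Fin n →₀ ℕ))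
    (hΔ : ∀ α, α ∈ Δ ↔ α ∈ f.support ∧ α ≠ 0 ∧
      (¬ ∃ i, α = Finsupp.single i (2 * d)) ∧
      (f.coeff α < 0 ∨ ∃ i, Odd (α i)))
    (a : (Fin n →₀ ℕ) → Fin n → ℝ) (ha : ∀ α ∈ Δ, ∀ i, 0 ≤ a α i)
    (ha0 : ∀ α ∈ Δ, ∀ i, a α i = 0 ↔ α i = 0)
    (h1 : ∀ α ∈ Δ, ∑ i, α i = 2 * d →
      ((2 * d : ℕ) : ℝ) ^ (2 * d) * ∏ i, (a α i) ^ (α i)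
        = |f.coeff α| ^ (2 * d) * ∏ i, ((α i : ℕ) : ℝ) ^ (α i))
    (h2 : ∀ i, ∑ α ∈ Δ, a α i ≤ f.coeff (Finsupp.single i (2 * d)))
    (h3 : ∑ α ∈ Δ with (∑ i, α i) < 2 * d,
        ((2 * d - ∑ i, α i : ℕ) : ℝ) *
          ((|f.coeff α| ^ (2 * d) * ∏ i, ((α i : ℕ) : ℝ) ^ (α i)) /
            (((2 * d : ℕ) : ℝ) ^ (2 * d) * ∏ i, (a α i) ^ (α i))) ^
              (1 / ((2 * d - ∑ i, α i : ℕ) : ℝ))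
      ≤ f.coeff 0 - r) :
    IsSumSq (f - C r) := by
  classical
  have hle : ∀ α ∈ Δ, ∑ i, α i ≤ 2 * d := fun α hα => by
    have := le_totalDegree ((hΔ α).1 hα).1
    rwa [hdeg, Finsupp.sum_fintype _ _ (by simp)] at this
  have hpos : ∀ α ∈ Δ, 0 < ∏ i, a α i ^ α i := fun α hα => Finset.prod_pos fun i _ => by
    by_cases hi : α i = 0
    · simp [hi]
    · exact pow_pos (lt_of_le_of_ne (ha α hα i) fun h => hi ((ha0 α hα i).1 h.symm)) _
  set E : (Fin n →₀ ℕ) → ℝ := fun α => (|f.coeff α| ^ (2 * d) * ∏ i, ((α i : ℕ) : ℝ) ^ (α i)) /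
    (((2 * d : ℕ) : ℝ) ^ (2 * d) * ∏ i, (a α i) ^ (α i)) with hE
  set m : (Fin n →₀ ℕ) → ℕ := fun α => 2 * d - ∑ i, α i with hm
  set T : (Fin n →₀ ℕ) → ℝ := fun α => E α ^ (1 / (m α : ℝ)) with hT
  have hE0 : ∀ α ∈ Δ, 0 ≤ E α := fun α hα =>
    div_nonneg (by positivity) (mul_nonneg (by positivity) (hpos α hα).le)
  have hterm : ∀ α ∈ Δ, IsSumSq (∑ i, C (a α i) * X i ^ (2 * d) + C (m α * T α)
      + monomial α (f.coeff α)) := by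
    intro α hα
    have htight : ((2 * d : ℕ) : ℝ) ^ (2 * d) * (∏ i, a α i ^ α i) * T α ^ m α
        = |f.coeff α| ^ (2 * d) * ∏ i, (α i : ℝ) ^ α i := by
      rcases (hle α hα).lt_or_eq with hlt | heq
      · have hm0 : m α ≠ 0 := Nat.sub_ne_zero_of_lt hlt
        have h2d : ((2 * d : ℕ) : ℝ) ≠ 0 := by exact_mod_cast (by omega : 2 * d ≠ 0)
        rw [hT]
        simp only [one_div]
        rw [Real.rpow_inv_natCast_pow (hE0 α hα) hm0]
        exact mul_div_cancel₀ _ (mul_ne_zero (pow_ne_zero _ h2d) (hpos α hα).ne')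
      · have hm0 : m α = 0 := by simp only [hm, heq, Nat.sub_self]
        rw [hm0, pow_zero, mul_one]
        exact h1 α hα heq
    have hterm' := isSumSq_term (A := MvPolynomial (Fin n) ℝ) hd α (m α)
      (Nat.add_sub_of_le (hle α hα)) (a α) (ha α hα) (ha0 α hα) (T α) |f.coeff α|
      (Real.rpow_nonneg (hE0 α hα) _) (abs_nonneg _) htight
    have hmon : monomial α (f.coeff α) = C (f.coeff α) * ∏ i, X i ^ α i := by
      rw [monomial_eq, Finsupp.prod_fintype _ _ (by simp)]
    rcases lt_or_ge (f.coeff α) 0 with hneg | hnn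
    · refine (hterm' X).of_eq ?_
      rw [hmon, abs_of_neg hneg, algebraMap_eq, C_neg]
      ring
    · obtain ⟨i₀, hi₀⟩ := ((hΔ α).1 hα).2.2.2.resolve_left (not_lt.2 hnn)
      -- negating a variable of odd exponent flips the sign of the monomial
      refine (hterm' fun i => (if i = i₀ then -1 else 1) * X i).of_eq ?_
      have e1 : ∀ i : Fin n, (if i = i₀ then (-1 : MvPolynomial (Fin n) ℝ) else 1) ^ (2 * d) = 1 :=
        fun i => by split_ifs <;> simp
      have e2 : ∏ i, (if i = i₀ then (-1 : MvPolynomial (Fin n) ℝ) else 1) ^ α i = -1 := by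
        rw [Finset.prod_eq_single i₀ (fun i _ hi => by simp [hi]) (by simp)]
        simp [hi₀.neg_one_pow]
      simp only [mul_pow, e1, one_mul, Finset.prod_mul_distrib, e2]
      rw [hmon, abs_of_nonneg hnn, algebraMap_eq]
      ring
  have hrest : IsSumSq (f - C (f.coeff 0)
      - ∑ i, C (f.coeff (Finsupp.single i (2 * d))) * X i ^ (2 * d)
      - ∑ α ∈ Δ, monomial α (f.coeff α)) := by
    refine isSumSq_of_even _ fun β hβ => ?_
    have hco : ∀ g : Fin n → ℝ, ∀ β : Fin n →₀ ℕ,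
        coeff β (∑ i, C (g i) * X i ^ (2 * d))
          = ∑ i, if Finsupp.single i (2 * d) = β then g i else 0 := fun g β => by
      simp [coeff_sum, coeff_C_mul, coeff_X_pow]
    have hd0 : 2 * d ≠ 0 := by omega
    simp only [coeff_sub, hco, coeff_sum, coeff_C, coeff_monomial, Finset.sum_ite_eq'] at hβ ⊢
    by_cases hβ0 : β = 0
    · subst hβ0
      have : (0 : Fin n →₀ ℕ) ∉ Δ := fun h => ((hΔ 0).1 h).2.1 rfl
      have hz : ∑ i, (if Finsupp.single i (2 * d) = (0 : Fin n →₀ ℕ) then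
          f.coeff (Finsupp.single i (2 * d)) else 0) = 0 :=
        Finset.sum_eq_zero fun i _ => if_neg fun h => hd0 (Finsupp.single_eq_zero.1 h)
      rw [hz, if_pos rfl, if_neg this] at hβ
      exact absurd (by ring) hβ
    by_cases hβs : ∃ i, β = Finsupp.single i (2 * d)
    · obtain ⟨i, rfl⟩ := hβs
      have hn : Finsupp.single i (2 * d) ∉ Δ := fun h => ((hΔ _).1 h).2.2.1 ⟨i, rfl⟩
      rw [Finset.sum_eq_single i (fun j _ hj => if_neg fun h =>
        hj ((Finsupp.single_left_inj hd0).1 h)) (by simp), if_pos rfl, if_neg hn,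
        if_neg (Ne.symm hβ0)] at hβ
      exact absurd (by ring) hβ
    have hs : ∑ i, (if Finsupp.single i (2 * d) = β then
        f.coeff (Finsupp.single i (2 * d)) else 0) = 0 :=
      Finset.sum_eq_zero fun i _ => if_neg fun h => hβs ⟨i, h.symm⟩
    rw [hs, if_neg (Ne.symm hβ0)] at hβ ⊢
    by_cases hβΔ : β ∈ Δ
    · simp [hβΔ] at hβ
    · simp only [hβΔ, if_false, sub_zero] at hβ ⊢
      have := mt (hΔ β).2 hβΔ
      simp only [mem_support_iff, not_and, not_or, not_exists, Nat.not_odd_iff_even] at this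
      obtain ⟨h, h'⟩ := this hβ hβ0 (fun i hi => hβs ⟨i, hi⟩)
      exact ⟨not_lt.1 h, h'⟩
  have hdiag : IsSumSq (∑ i, C (f.coeff (Finsupp.single i (2 * d)) - ∑ α ∈ Δ, a α i)
      * (X i : MvPolynomial (Fin n) ℝ) ^ (2 * d)) :=
    IsSumSq.sum fun i _ => (isSumSq_algebraMap (A := MvPolynomial (Fin n) ℝ)
      (sub_nonneg.2 (h2 i))).mul ((even_two_mul d).isSquare_pow _).isSumSq
  have h3' : ∑ α ∈ Δ, m α * T α ≤ f.coeff 0 - r := by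
    refine le_of_eq_of_le ?_ h3
    -- terms with `|α| = 2d` have weight `m α = 0`
    refine (Finset.sum_filter_of_ne fun α hα hne => ?_).symm
    by_contra hcon
    exact hne (by simp [hm, Nat.sub_eq_zero_of_le (not_lt.1 hcon)])
  have hconst : IsSumSq (C (f.coeff 0 - r - ∑ α ∈ Δ, m α * T α) : MvPolynomial (Fin n) ℝ) :=
    isSumSq_algebraMap (A := MvPolynomial (Fin n) ℝ) (sub_nonneg.2 h3')
  have htot := ((hrest.add hdiag).add hconst).add (IsSumSq.sum hterm)
  refine htot.of_eq ?_
  simp only [C_sub, sub_mul, Finset.sum_sub_distrib, Finset.sum_add_distrib, map_sum,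
    Finset.sum_mul]
  rw [Finset.sum_comm (s := Δ)]
  ring
end
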